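/- Tauberian principle in an ordered Polish space: Let X be a Polish space with a closed down-compact partial order ⪯, and let ⪯_st be the induced stochastic order on Borel probability measures (P ⪯_st P' iff P(A) ≤ P'(A) for every ⪯-increasing Borel event A). Then ⪯_st is a closed partial order on the space of Borel probability measures on X with the weak topology, and it is down-compact: for every compact family 𝒦⁺ of probability measures, the set {P : ∃ P⁺ ∈ 𝒦⁺, P ⪯_st P⁺} is compact. Consequently, the sandwich theorem holds for ⪯_st: if Pₙ⁻ ⪯_st Pₙ ⪯_st Pₙ⁺ for all n and Pₙ⁻ → P∞, Pₙ⁺ → P∞ weakly, then Pₙ → P∞ weakly. -/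

import Mathlib

open MeasureTheory Filter

/-- An event is increasing for a relation `r` if it is stable under going `r`-upwards. -/
def IsIncreasingEvent {X : Type*} (r : X → X → Prop) (A : Set X) : Prop :=
  ∀ ⦃x⦄, x ∈ A → ∀ ⦃y⦄, r x y → y ∈ A

/-- Stochastic domination of Borel probability measures induced by a relation `r`:
`P ⪯_st P'` iff `P(A) ≤ P'(A)` for every `r`-increasing Borel event `A`. -/
def StochDom {X : Type*} [TopologicalSpace X] [MeasurableSpace X]
    (r : X → X → Prop) (P P' : ProbabilityMeasure X) : Prop :=
  ∀ A : Set X, MeasurableSet A → IsIncreasingEvent r A → P A ≤ P' A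

open Topology Set

/-- Up-set of a set. -/
def UpSet' {X : Type*} (r : X → X → Prop) (K : Set X) : Set X := {y | ∃ x ∈ K, r x y}

lemma stochDom_iff {X : Type*} [TopologicalSpace X] [MeasurableSpace X]
    (r : X → X → Prop) (P Q : ProbabilityMeasure X) :
    StochDom r P Q ↔ ∀ A : Set X, MeasurableSet A → IsIncreasingEvent r A →
      (P : Measure X) A ≤ (Q : Measure X) A := by
  unfold StochDom
  simp_rw [← ProbabilityMeasure.ennreal_coeFn_eq_coeFn_toMeasure, ENNReal.coe_le_coe]

lemma upSet_incr {X : Type*} {r : X → X → Prop} (htrans : ∀ x y z, r x y → r y z → r x z)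
    (K : Set X) : IsIncreasingEvent r (UpSet' r K) := by
  rintro x ⟨k, hk, hkx⟩ y hxy
  exact ⟨k, hk, htrans _ _ _ hkx hxy⟩

lemma upSet_closed {X : Type*} [MetricSpace X] {r : X → X → Prop}
    (hclosed : IsClosed {p : X × X | r p.1 p.2}) {K : Set X} (hK : IsCompact K) :
    IsClosed (UpSet' r K) := by
  apply IsSeqClosed.isClosed
  intro y y0 hy hlim
  choose k hk hr using hy
  obtain ⟨k0, hk0, φ, hφ, hφl⟩ := hK.tendsto_subseq hk
  refine ⟨k0, hk0, ?_⟩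
  have h2 : Tendsto (fun n => (k (φ n), y (φ n))) atTop (𝓝 (k0, y0)) :=
    Tendsto.prodMk_nhds hφl (hlim.comp hφ.tendsto_atTop)
  exact hclosed.mem_of_tendsto h2 (Eventually.of_forall fun n => hr (φ n))

lemma fiber_closed {X : Type*} [MetricSpace X] {r : X → X → Prop}
    (hclosed : IsClosed {p : X × X | r p.1 p.2}) (y : X) : IsClosed {x | r x y} :=
  hclosed.preimage (f := fun x : X => (x, y)) (by fun_prop)

lemma upSet_inter {X : Type*} [MetricSpace X] {r : X → X → Prop}
    (hclosed : IsClosed {p : X × X | r p.1 p.2}) {K C : Set X} (hK : IsClosed K)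
    (hC : IsCompact C) :
    ⋂ n : ℕ, UpSet' r (Metric.cthickening (1 / ((n : ℝ) + 1)) K ∩ C) ⊆ UpSet' r K := by
  intro y hy
  simp only [mem_iInter] at hy
  let t : ℕ → Set X := fun n => Metric.cthickening (1 / ((n : ℝ) + 1)) K ∩ (C ∩ {x | r x y})
  have hcl : ∀ n, IsClosed (t n) := fun n =>
    Metric.isClosed_cthickening.inter (hC.isClosed.inter (fiber_closed hclosed y))
  have hne : (⋂ n, t n).Nonempty := by
    apply IsCompact.nonempty_iInter_of_sequence_nonempty_isCompact_isClosed t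
    · intro i
      apply inter_subset_inter_left
      apply Metric.cthickening_mono
      apply one_div_le_one_div_of_le
      · positivity
      · push_cast; linarith
    · intro i
      obtain ⟨k, ⟨h1, h2⟩, h3⟩ := hy i
      exact ⟨k, h1, h2, h3⟩
    · exact (hC.inter_right (fiber_closed hclosed y)).inter_left Metric.isClosed_cthickening
    · exact hcl
  obtain ⟨k, hk⟩ := hne
  simp only [mem_iInter] at hk
  refine ⟨k, ?_, (hk 0).2.2⟩
  rw [← hK.closure_eq, Metric.mem_closure_iff_infEDist_zero]
  have h0 : Tendsto (fun n : ℕ => ENNReal.ofReal (1 / ((n : ℝ) + 1))) atTop (𝓝 0) := by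
    simpa using ENNReal.tendsto_ofReal (tendsto_one_div_add_atTop_nhds_zero_nat (𝕜 := ℝ))
  have := ge_of_tendsto' h0 (fun n => (hk n).1)
  simpa using this

section
variable {X : Type*} [MetricSpace X] [CompleteSpace X]
    [SecondCountableTopology X] [MeasurableSpace X] [BorelSpace X]

lemma stochDom_lim {r : X → X → Prop}
    (hrefl : ∀ x, r x x)
    (htrans : ∀ x y z, r x y → r y z → r x z)
    (hclosed : IsClosed {p : X × X | r p.1 p.2})
    (Ps Qs : ℕ → ProbabilityMeasure X) (P Q : ProbabilityMeasure X)
    (h : ∀ n, StochDom r (Ps n) (Qs n))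
    (hP : Tendsto Ps atTop (𝓝 P)) (hQ : Tendsto Qs atTop (𝓝 Q)) : StochDom r P Q := by
  simp only [stochDom_iff] at h ⊢
  intro A hA hAi
  have htight := isTightMeasureSet_of_isCompact_closure
    (S := insert P (range Ps)) hP.isCompact_insert_range.closure
  rw [isTightMeasureSet_iff_exists_isCompact_measure_compl_le] at htight
  -- compact sets
  have key : ∀ K : Set X, IsCompact K → (P : Measure X) K ≤ (Q : Measure X) (UpSet' r K) := by
    intro K hK
    apply ENNReal.le_of_forall_pos_le_add
    intro δ hδ _
    obtain ⟨C, hC, hCm⟩ := htight δ (by exact_mod_cast hδ)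
    let F : ℕ → Set X := fun m => UpSet' r (Metric.cthickening (1 / ((m : ℝ) + 1)) K ∩ C)
    have hF : ∀ m, IsClosed (F m) := fun m =>
      upSet_closed hclosed (hC.inter_left Metric.isClosed_cthickening)
    have hm : ∀ m, (P : Measure X) K ≤ (Q : Measure X) (F m) + δ := by
      intro m
      let U := Metric.thickening (1 / ((m : ℝ) + 1)) K
      have hU : IsOpen U := Metric.isOpen_thickening
      have hKU : K ⊆ U := Metric.self_subset_thickening (by positivity) K
      have h1 : (P : Measure X) K ≤ liminf (fun n => (Ps n : Measure X) U) atTop :=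
        (measure_mono hKU).trans
          (ProbabilityMeasure.le_liminf_measure_open_of_tendsto hP hU)
      have h2 := ProbabilityMeasure.limsup_measure_closed_le_of_tendsto hQ (hF m)
      have h3 : ∀ n, (Ps n : Measure X) U ≤ (Qs n : Measure X) (F m) + δ := by
        intro n
        have hsub : U ⊆ F m ∪ Cᶜ := by
          intro x hx
          by_cases hxC : x ∈ C
          · exact Or.inl ⟨x, ⟨Metric.thickening_subset_cthickening _ _ hx, hxC⟩, hrefl x⟩
          · exact Or.inr hxC
        calc (Ps n : Measure X) U ≤ (Ps n : Measure X) (F m ∪ Cᶜ) := measure_mono hsub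
          _ ≤ (Ps n : Measure X) (F m) + (Ps n : Measure X) Cᶜ := measure_union_le _ _
          _ ≤ _ := add_le_add (h n _ (hF m).measurableSet (upSet_incr htrans _))
              (hCm _ ⟨Ps n, Or.inr ⟨n, rfl⟩, rfl⟩)
      have h4 : (P : Measure X) K - δ ≤ (Q : Measure X) (F m) := by
        refine le_trans ?_ h2
        calc (P : Measure X) K - δ ≤ liminf (fun n => (Ps n : Measure X) U) atTop - δ :=
              tsub_le_tsub_right h1 _
          _ ≤ liminf (fun n => (Qs n : Measure X) (F m)) atTop := by
              rw [tsub_le_iff_right]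
              refine ENNReal.le_of_forall_pos_le_add ?_ |>.trans le_rfl
              intro ε hε _
              by_contra hcon
              push Not at hcon
              have hL : liminf (fun n => (Qs n : Measure X) (F m)) atTop ≠ ⊤ := by
                intro ht
                simp [ht] at hcon
              have hfr := frequently_lt_of_liminf_lt (f := atTop)
                (u := fun n => (Qs n : Measure X) (F m))
                (b := liminf (fun n => (Qs n : Measure X) (F m)) atTop + ε) (by isBoundedDefault)
                (ENNReal.lt_add_right hL (by exact_mod_cast hε.ne'))
              have hev := eventually_lt_of_lt_liminf hcon
              obtain ⟨n, hn1, hn2⟩ := (hfr.and_eventually hev).exists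
              have := hn2.trans_le (h3 n)
              have h5 : (Qs n : Measure X) (F m) + δ ≤
                  liminf (fun n => (Qs n : Measure X) (F m)) atTop + ε + δ := by
                gcongr
              rw [add_right_comm] at this
              exact absurd (this.trans_le h5) (lt_irrefl _)
          _ ≤ _ := liminf_le_limsup
      exact tsub_le_iff_right.1 h4
    have hanti' : Antitone F := by
      intro i j hij y
      rintro ⟨k, ⟨hk, hkC⟩, hr⟩
      refine ⟨k, ⟨Metric.cthickening_mono ?_ _ hk, hkC⟩, hr⟩
      apply one_div_le_one_div_of_le
      · positivity
      · gcongr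
    have hlim := tendsto_measure_iInter_atTop (μ := (Q : Measure X)) (s := F)
      (fun i => (hF i).measurableSet.nullMeasurableSet) hanti' ⟨0, measure_ne_top _ _⟩
    have h6 : (P : Measure X) K ≤ (Q : Measure X) (⋂ n, F n) + δ :=
      ge_of_tendsto' (hlim.add_const (δ : ENNReal)) hm
    exact h6.trans (add_le_add_left (measure_mono (upSet_inter hclosed hK.isClosed hC)) _)
  apply le_of_forall_lt
  intro c hc
  obtain ⟨K, hKA, hK, hcK⟩ := hA.exists_lt_isCompact hc
  refine hcK.trans_le ((key K hK).trans (measure_mono ?_))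
  rintro y ⟨k, hk, hr⟩
  exact hAi (hKA hk) hr

lemma stochDom_closed {r : X → X → Prop}
    (hrefl : ∀ x, r x x)
    (htrans : ∀ x y z, r x y → r y z → r x z)
    (hclosed : IsClosed {p : X × X | r p.1 p.2}) :
    IsClosed {p : ProbabilityMeasure X × ProbabilityMeasure X | StochDom r p.1 p.2} := by
  apply IsSeqClosed.isClosed
  intro p p0 hp hlim
  exact stochDom_lim hrefl htrans hclosed (fun n => (p n).1) (fun n => (p n).2) _ _ hp
    hlim.fst_nhds hlim.snd_nhds

lemma stochDom_antisymm {r : X → X → Prop}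
    (hrefl : ∀ x, r x x) (hanti : ∀ x y, r x y → r y x → x = y)
    (htrans : ∀ x y z, r x y → r y z → r x z)
    (hclosed : IsClosed {p : X × X | r p.1 p.2})
    (P Q : ProbabilityMeasure X) (h1 : StochDom r P Q) (h2 : StochDom r Q P) : P = Q := by
  rw [stochDom_iff] at h1 h2
  let S : Set (Set X) := {A | MeasurableSet A ∧ IsIncreasingEvent r A}
  have hpi : IsPiSystem S := by
    rintro A ⟨hA, hA'⟩ B ⟨hB, hB'⟩ -
    exact ⟨hA.inter hB, fun x hx y hxy => ⟨hA' hx.1 hxy, hB' hx.2 hxy⟩⟩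
  have hle : MeasurableSpace.generateFrom S ≤ ‹MeasurableSpace X› :=
    MeasurableSpace.generateFrom_le fun A hA => hA.1
  have hagree : ∀ T, MeasurableSet[MeasurableSpace.generateFrom S] T →
      (P : Measure X) T = (Q : Measure X) T := by
    intro T hT
    induction T, hT using MeasurableSpace.induction_on_inter rfl hpi with
    | empty => simp
    | basic A hA => exact le_antisymm (h1 A hA.1 hA.2) (h2 A hA.1 hA.2)
    | compl T hT ih => rw [prob_compl_eq_one_sub (hle _ hT), prob_compl_eq_one_sub (hle _ hT), ih]
    | iUnion f hd hm ih =>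
      rw [measure_iUnion hd (fun i => hle _ (hm i)), measure_iUnion hd (fun i => hle _ (hm i))]
      simp_rw [ih]
  -- sigma-compact carrier
  have htight := isTightMeasureSet_of_isCompact_closure
    (S := ({P, Q} : Set (ProbabilityMeasure X))) (toFinite _).isCompact.closure
  rw [isTightMeasureSet_iff_exists_isCompact_measure_compl_le] at htight
  have hex : ∀ n : ℕ, ∃ K : Set X, IsCompact K ∧ (P : Measure X) Kᶜ ≤ ((n : ENNReal) + 1)⁻¹ ∧
      (Q : Measure X) Kᶜ ≤ ((n : ENNReal) + 1)⁻¹ := by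
    intro n
    obtain ⟨K, hK, hm⟩ := htight ((n : ENNReal) + 1)⁻¹ (by simp)
    exact ⟨K, hK, hm _ ⟨P, by simp, rfl⟩, hm _ ⟨Q, by simp, rfl⟩⟩
  choose K hK hKP hKQ using hex
  have hacc : ∀ n, IsCompact (accumulate K n) := fun n =>
    (finite_Iic n).isCompact_biUnion fun i _ => hK i
  let C : Set X := ⋃ n, K n
  have hCm : MeasurableSet C := MeasurableSet.iUnion fun n => (hK n).isClosed.measurableSet
  have hz : ∀ μ : Measure X, (∀ n : ℕ, μ (K n)ᶜ ≤ ((n : ENNReal) + 1)⁻¹) → μ Cᶜ = 0 := by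
    intro μ hμ
    have ht : Tendsto (fun n : ℕ => ((n : ENNReal) + 1)⁻¹) atTop (𝓝 0) := by
      have := (tendsto_add_atTop_iff_nat 1).2 ENNReal.tendsto_inv_nat_nhds_zero
      simpa using this
    refine le_antisymm (ge_of_tendsto' ht fun n => ?_) zero_le
    exact (measure_mono (compl_subset_compl.2 (subset_iUnion K n))).trans (hμ n)
  obtain ⟨b, hbc, -, hb⟩ := TopologicalSpace.exists_countable_basis X
  have : Countable b := hbc.to_subtype
  let f : X → (b × ℕ → Prop) :=
    fun x i => x ∈ UpSet' r (closure (i.1 : Set X) ∩ accumulate K i.2)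
  have hAS : ∀ i : b × ℕ, UpSet' r (closure (i.1 : Set X) ∩ accumulate K i.2) ∈ S := fun i =>
    ⟨(upSet_closed hclosed ((hacc i.2).inter_left isClosed_closure)).measurableSet,
      upSet_incr htrans _⟩
  have hf : Measurable[MeasurableSpace.generateFrom S] f := by
    refine @measurable_pi_lambda _ _ _ (MeasurableSpace.generateFrom S) _ _ fun i => ?_
    exact (@measurableSet_setOf _ (MeasurableSpace.generateFrom S) _).1
      (MeasurableSpace.measurableSet_generateFrom (hAS i))
  have hf' : Measurable f := hf.mono hle le_rfl
  have hsep : ∀ x ∈ C, ∀ y ∈ C, f x = f y → r x y := by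
    intro x hx y hy hxy
    obtain ⟨n, hn⟩ := mem_iUnion.1 hx
    have hxn : x ∈ accumulate K n := subset_accumulate hn
    by_contra hr
    have hopen : IsOpen {z | ¬ r z y} := (fiber_closed hclosed y).isOpen_compl
    obtain ⟨s, hs, hss⟩ := hb.exists_closure_subset (hopen.mem_nhds hr)
    obtain ⟨hsb, hss⟩ := hss
    have hfx : f x (⟨s, hs⟩, n) := ⟨x, ⟨subset_closure hsb, hxn⟩, hrefl x⟩
    rw [hxy] at hfx
    obtain ⟨k, ⟨hk, _⟩, hkr⟩ := hfx
    exact hss hk hkr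
  have hinj : InjOn f C := fun x hx y hy hxy =>
    hanti x y (hsep x hx y hy hxy) (hsep y hy x hx hxy.symm)
  apply Subtype.ext
  apply Measure.ext
  intro T hT
  have hTm : MeasurableSet (f '' (T ∩ C)) :=
    (hT.inter hCm).image_of_measurable_injOn hf' (hinj.mono inter_subset_right)
  have hp : ∀ μ : Measure X, μ Cᶜ = 0 → μ T = μ (f ⁻¹' (f '' (T ∩ C))) := by
    intro μ hμ
    apply measure_congr
    have hae : ∀ᵐ x ∂μ, x ∈ C := hμ
    filter_upwards [hae] with x hx
    apply propext
    constructor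
    · intro hxT
      exact ⟨x, ⟨hxT, hx⟩, rfl⟩
    · rintro ⟨y, ⟨hyT, hyC⟩, hyx⟩
      rw [← hinj hyC hx hyx]
      exact hyT
  exact (hp _ (hz _ hKP)).trans ((hagree _ (hf hTm)).trans (hp _ (hz _ hKQ)).symm)

lemma stochDom_downCompact {r : X → X → Prop}
    (hrefl : ∀ x, r x x)
    (htrans : ∀ x y z, r x y → r y z → r x z)
    (hclosed : IsClosed {p : X × X | r p.1 p.2})
    (hdc : ∀ K : Set X, IsCompact K → IsCompact {x | ∃ y ∈ K, r x y})
    (𝒦 : Set (ProbabilityMeasure X)) (h𝒦 : IsCompact 𝒦) :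
    IsCompact {P : ProbabilityMeasure X | ∃ Q ∈ 𝒦, StochDom r P Q} := by
  set D := {P : ProbabilityMeasure X | ∃ Q ∈ 𝒦, StochDom r P Q} with hD
  have htight := isTightMeasureSet_of_isCompact_closure h𝒦.closure
  have hDt : IsCompact (closure D) := by
    apply isCompact_closure_of_isTightMeasureSet
    rw [isTightMeasureSet_iff_exists_isCompact_measure_compl_le] at htight ⊢
    intro ε hε
    obtain ⟨K, hK, hm⟩ := htight ε hε
    refine ⟨_, hdc K hK, ?_⟩
    rintro _ ⟨P, ⟨Q, hQ, hPQ⟩, rfl⟩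
    rw [stochDom_iff] at hPQ
    refine (hPQ _ (hdc K hK).isClosed.measurableSet.compl ?_).trans
      ((measure_mono ?_).trans (hm _ ⟨Q, hQ, rfl⟩))
    · rintro x hx y hxy ⟨k, hk, hyk⟩
      exact hx ⟨k, hk, htrans _ _ _ hxy hyk⟩
    · apply compl_subset_compl.2
      exact fun k hk => ⟨k, hk, hrefl k⟩
  have hc := ((hDt.prod h𝒦).inter_left (stochDom_closed hrefl htrans hclosed)).image
    continuous_fst
  convert hc using 1
  ext P
  constructor
  · rintro ⟨Q, hQ, hPQ⟩
    exact ⟨(P, Q), ⟨hPQ, subset_closure ⟨Q, hQ, hPQ⟩, hQ⟩, rfl⟩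
  · rintro ⟨⟨P', Q⟩, ⟨hPQ, -, hQ⟩, rfl⟩
    exact ⟨Q, hQ, hPQ⟩

end

/-- Tauberian principle in an ordered Polish space: if `⪯` is a closed, down-compact
partial order on a Polish space `X`, then the induced stochastic order `⪯_st` on
Borel probability measures is a closed, down-compact partial order for the topology
of weak convergence, and the sandwich theorem holds for `⪯_st`. -/
theorem stmt_19 {X : Type*} [MetricSpace X] [CompleteSpace X]
    [SecondCountableTopology X] [MeasurableSpace X] [BorelSpace X]
    (r : X → X → Prop)
    (hrefl : ∀ x, r x x) (hanti : ∀ x y, r x y → r y x → x = y)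
    (htrans : ∀ x y z, r x y → r y z → r x z)
    (hclosed : IsClosed {p : X × X | r p.1 p.2})
    (hdc : ∀ K : Set X, IsCompact K → IsCompact {x | ∃ y ∈ K, r x y}) :
    (∀ P : ProbabilityMeasure X, StochDom r P P) ∧
    (∀ P Q : ProbabilityMeasure X, StochDom r P Q → StochDom r Q P → P = Q) ∧
    (∀ P Q R : ProbabilityMeasure X,
      StochDom r P Q → StochDom r Q R → StochDom r P R) ∧
    IsClosed {p : ProbabilityMeasure X × ProbabilityMeasure X | StochDom r p.1 p.2} ∧
    (∀ 𝒦 : Set (ProbabilityMeasure X), IsCompact 𝒦 →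
      IsCompact {P : ProbabilityMeasure X | ∃ Q ∈ 𝒦, StochDom r P Q}) ∧
    (∀ (Pm P Pp : ℕ → ProbabilityMeasure X) (Pinf : ProbabilityMeasure X),
      (∀ n, StochDom r (Pm n) (P n)) → (∀ n, StochDom r (P n) (Pp n)) →
      Tendsto Pm atTop (nhds Pinf) → Tendsto Pp atTop (nhds Pinf) →
      Tendsto P atTop (nhds Pinf)) := by
  have hcl := stochDom_closed (r := r) hrefl htrans hclosed
  have hdown := stochDom_downCompact hrefl htrans hclosed hdc
  have has := stochDom_antisymm hrefl hanti htrans hclosed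
  refine ⟨fun P A _ _ => le_rfl, has, fun P Q R h1 h2 A hA hi => (h1 A hA hi).trans (h2 A hA hi),
    hcl, hdown, ?_⟩
  intro Pm P Pp Pinf h1 h2 hm hp
  refine (hdown _ hp.isCompact_insert_range).tendsto_nhds_of_unique_mapClusterPt
    (Eventually.of_forall fun n => ⟨Pp n, Or.inr ⟨n, rfl⟩, h2 n⟩) ?_
  intro R _ hR
  obtain ⟨U, hU, hUR⟩ := mapClusterPt_iff_ultrafilter.1 hR
  refine has R Pinf ?_ ?_
  · exact hcl.mem_of_tendsto (hUR.prodMk_nhds (hp.mono_left hU)) (Eventually.of_forall h2)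
  · exact hcl.mem_of_tendsto ((hm.mono_left hU).prodMk_nhds hUR) (Eventually.of_forall h1)
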